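/- arXiv:math/0507529 — 4 statements merged into one kernel-verified Lean document; each statement's English description precedes it below -/
import Mathlib

section
/- Let α, β > 0 be real numbers. A 2×2 contingency table P (strictly positive entries summing to 1) satisfies r_× = α² and r_∥ = β² if and only if there exists a real number v with 0 < v < 1/(α+β) such that p₀₀ = (β/(β + 1/α))·(1 − (β+α)v), p₀₁ = (1/(αβ+1))·(1 − (β+α)v), p₁₀ = βv, and p₁₁ = αv. -/
/-!
In terms of the row odds `x = p00 / p01` and `y = p11 / p10`, the two ratios are `r_× = x * y` and
`r_∥ = x / y`. Multiplying them shows that `r_× = α ^ 2` and `r_∥ = β ^ 2` amount to `x = α * β` and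
`y = α / β`. The second equation makes the bottom row `(β * v, α * v)`, leaving mass
`1 - (β + α) * v` for the top row, which the first equation splits in the proportion `α * β : 1`.
-/

section Field

variable {K : Type*} [Field K]

theorem div_eq_div_iff_exists_eq_mul {a b x y : K} (hb : b ≠ 0) (hx : x ≠ 0) :
    y / x = a / b ↔ ∃ v, x = b * v ∧ y = a * v := by
  constructor
  · intro h
    refine ⟨x / b, (mul_div_cancel₀ x hb).symm, ?_⟩
    calc y = a / b * x := (div_eq_iff hx).1 h
      _ = a * (x / b) := by ring
  · rintro ⟨v, rfl, rfl⟩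
    exact mul_div_mul_right a b (right_ne_zero_of_mul hx)

theorem div_eq_iff_of_add_eq {c s x y : K} (hc : c + 1 ≠ 0) (hy : y ≠ 0) (hs : x + y = s) :
    x / y = c ↔ x = c / (c + 1) * s ∧ y = 1 / (c + 1) * s := by
  rw [div_eq_iff hy]
  constructor
  · rintro rfl
    have hs' : s = (c + 1) * y := by rw [← hs]; ring
    subst hs'
    constructor <;> field_simp
  · rintro ⟨hx, hy⟩
    rw [hx, hy]
    ring

end Field

section LinearOrderedField

variable {K : Type*} [Field K] [LinearOrder K] [IsStrictOrderedRing K]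

theorem mul_eq_sq_and_div_eq_sq_iff {a b x y : K} (ha : 0 < a) (hb : 0 < b) (hx : 0 ≤ x) :
    x * y = a ^ 2 ∧ x / y = b ^ 2 ↔ x = a * b ∧ y = a / b := by
  constructor
  · rintro ⟨hmul, hdiv⟩
    have hy : y ≠ 0 := right_ne_zero_of_mul (hmul ▸ pow_ne_zero 2 ha.ne')
    have hsq : x ^ 2 = (a * b) ^ 2 := by
      calc x ^ 2 = x * y * (x / y) := by field_simp
        _ = (a * b) ^ 2 := by rw [hmul, hdiv, mul_pow]
    have hxab : x = a * b := (pow_left_inj₀ hx (by positivity) two_ne_zero).1 hsq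
    refine ⟨hxab, mul_left_cancel₀ (mul_pos ha hb).ne' ?_⟩
    calc a * b * y = a ^ 2 := hxab ▸ hmul
      _ = a * b * (a / b) := by field_simp
  · rintro ⟨rfl, rfl⟩
    constructor <;> field_simp

theorem crossProduct_and_columnOdds_eq_sq_iff_rowOdds_eq {α β p00 p01 p10 p11 : K}
    (hα : 0 < α) (hβ : 0 < β) (htop : 0 ≤ p00 / p01) :
    (p00 * p11 / (p01 * p10) = α ^ 2 ∧ p00 * p10 / (p01 * p11) = β ^ 2) ↔
      p00 / p01 = α * β ∧ p11 / p10 = α / β := by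
  rw [← mul_eq_sq_and_div_eq_sq_iff hα hβ htop, mul_div_mul_comm, div_div_div_eq]

theorem stmt_3_general {α β p00 p01 p10 p11 : K} (hα : 0 < α) (hβ : 0 < β)
    (h00 : 0 < p00) (h01 : 0 < p01) (h10 : 0 < p10)
    (hsum : p00 + p01 + p10 + p11 = 1) :
    (p00 * p11 / (p01 * p10) = α ^ 2 ∧ p00 * p10 / (p01 * p11) = β ^ 2) ↔
    ∃ v : K, 0 < v ∧ v < 1 / (α + β) ∧
      p00 = (β / (β + 1 / α)) * (1 - (β + α) * v) ∧
      p01 = (1 / (α * β + 1)) * (1 - (β + α) * v) ∧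
      p10 = β * v ∧
      p11 = α * v := by
  have hcoeff : β / (β + 1 / α) = α * β / (α * β + 1) := by field_simp
  have hden : α * β + 1 ≠ 0 := by positivity
  rw [crossProduct_and_columnOdds_eq_sq_iff_rowOdds_eq hα hβ (by positivity), hcoeff,
    div_eq_div_iff_exists_eq_mul hβ.ne' h10.ne']
  constructor
  · rintro ⟨htop, v, hp10, hp11⟩
    have htop_sum : p00 + p01 = 1 - (β + α) * v := by linarith
    obtain ⟨hp00, hp01⟩ := (div_eq_iff_of_add_eq hden h01.ne' htop_sum).1 htop
    have hv : 0 < v := pos_of_mul_pos_right (hp10 ▸ h10) hβ.le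
    have hv_lt : v < 1 / (α + β) := by
      rw [lt_div_iff₀ (by positivity)]
      linarith
    exact ⟨v, hv, hv_lt, hp00, hp01, hp10, hp11⟩
  · rintro ⟨v, -, -, hp00, hp01, hp10, hp11⟩
    have htop_sum : p00 + p01 = 1 - (β + α) * v := by linarith
    exact ⟨(div_eq_iff_of_add_eq hden h01.ne' htop_sum).2 ⟨hp00, hp01⟩, v, hp10, hp11⟩

end LinearOrderedField

/-- A 2×2 contingency table (positive entries summing to 1) satisfies
`r_× = α²` and `r_∥ = β²` iff it has the parametric form of Proposition `x=PROP`
for some `0 < v < 1/(α+β)`. -/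
theorem stmt_3 (α β p00 p01 p10 p11 : ℝ) (hα : 0 < α) (hβ : 0 < β)
    (h00 : 0 < p00) (h01 : 0 < p01) (h10 : 0 < p10) (h11 : 0 < p11)
    (hsum : p00 + p01 + p10 + p11 = 1) :
    (p00 * p11 / (p01 * p10) = α ^ 2 ∧ p00 * p10 / (p01 * p11) = β ^ 2) ↔
    ∃ v : ℝ, 0 < v ∧ v < 1 / (α + β) ∧
      p00 = (β / (β + 1 / α)) * (1 - (β + α) * v) ∧
      p01 = (1 / (α * β + 1)) * (1 - (β + α) * v) ∧
      p10 = β * v ∧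
      p11 = α * v := by
  exact stmt_3_general hα hβ h00 h01 h10 hsum
end

section
/- Let α, β > 0. The function f(v) = (1/(αβ+1))·(1 − (β+α)v)²/v maps the open interval (0, 1/(α+β)) bijectively onto (0, +∞); in particular it is strictly decreasing on this interval. Consequently, with r_× = α² and r_∥ = β² fixed, the third ratio r_= can take any value in (0, +∞). -/
/-!
A positive decreasing numerator `g` over `v > 0` gives a strictly decreasing quotient `g v / v`.
If `g` is continuous on `[0, b]` with `g 0 > 0 ≥ g b`, then `v ↦ g v - y * v` changes sign on
`[0, b]` for every `y > 0`, so the quotient takes the value `y`; no limits at the endpoints are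
needed. The theorem is the case `g v = c * (1 - s * v) ^ n`, `b = 1 / s`.
-/

open Set

section OrderedField

variable {K : Type*} [Field K] [LinearOrder K] [IsStrictOrderedRing K]

theorem strictAntiOn_div_id_of_antitoneOn {g : K → K} {t : Set K} (ht : t ⊆ Ioi 0)
    (hanti : AntitoneOn g t) (hpos : ∀ v ∈ t, 0 < g v) :
    StrictAntiOn (fun v => g v / v) t := by
  intro v hv w hw hvw
  calc g w / w ≤ g v / w := div_le_div_of_nonneg_right (hanti hv hw hvw.le) (ht hw).le
    _ < g v / v := div_lt_div_of_pos_left (hpos v hv) (ht hv) hvw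

theorem one_sub_mul_pos_of_lt_one_div {s v : K} (hs : 0 < s) (hv : v < 1 / s) :
    0 < 1 - s * v :=
  sub_pos.2 ((lt_div_iff₀' hs).1 hv)

theorem antitoneOn_mul_one_sub_mul_pow {c s : K} (hc : 0 ≤ c) (hs : 0 < s) (n : ℕ) :
    AntitoneOn (fun v => c * (1 - s * v) ^ n) (Iio (1 / s)) := by
  intro v _ w hw hvw
  have hw_pos : 0 < 1 - s * w := one_sub_mul_pos_of_lt_one_div hs hw
  dsimp only
  gcongr

end OrderedField

theorem surjOn_div_id_Ioo_Ioi {g : ℝ → ℝ} {b : ℝ} (hb : 0 < b)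
    (hcont : ContinuousOn g (Icc 0 b)) (hg_zero : 0 < g 0) (hg_right : g b ≤ 0) :
    SurjOn (fun v => g v / v) (Ioo 0 b) (Ioi 0) := by
  intro y (hy : 0 < y)
  have hcont_sub : ContinuousOn (fun v => g v - y * v) (Icc 0 b) := by fun_prop
  have hneg : g b - y * b < 0 := by linarith [mul_pos hy hb]
  have hpos : 0 < g 0 - y * 0 := by simpa using hg_zero
  obtain ⟨v, hv, hroot⟩ := intermediate_value_Ioo' hb.le hcont_sub ⟨hneg, hpos⟩
  exact ⟨v, hv, (div_eq_iff hv.1.ne').2 (sub_eq_zero.1 hroot)⟩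

theorem bijOn_div_id_Ioo_Ioi {g : ℝ → ℝ} {b : ℝ} (hb : 0 < b)
    (hcont : ContinuousOn g (Icc 0 b)) (hanti : AntitoneOn g (Ioo 0 b))
    (hpos : ∀ v ∈ Ico 0 b, 0 < g v) (hg_right : g b ≤ 0) :
    BijOn (fun v => g v / v) (Ioo 0 b) (Ioi 0) where
  left _ hv := div_pos (hpos _ (Ioo_subset_Ico_self hv)) hv.1
  right := ⟨(strictAntiOn_div_id_of_antitoneOn Ioo_subset_Ioi_self hanti
      fun v hv => hpos v (Ioo_subset_Ico_self hv)).injOn,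
    surjOn_div_id_Ioo_Ioi hb hcont (hpos 0 (left_mem_Ico.2 hb)) hg_right⟩

theorem stmt_5_general {c s : ℝ} (hc : 0 < c) (hs : 0 < s) {n : ℕ} (hn : n ≠ 0) :
    BijOn (fun v : ℝ => c * (1 - s * v) ^ n / v) (Ioo 0 (1 / s)) (Ioi 0) ∧
    StrictAntiOn (fun v : ℝ => c * (1 - s * v) ^ n / v) (Ioo 0 (1 / s)) := by
  have hpos : ∀ v < 1 / s, 0 < c * (1 - s * v) ^ n := fun v hv =>
    mul_pos hc (pow_pos (one_sub_mul_pos_of_lt_one_div hs hv) n)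
  have hanti : AntitoneOn (fun v => c * (1 - s * v) ^ n) (Ioo 0 (1 / s)) :=
    (antitoneOn_mul_one_sub_mul_pow hc.le hs n).mono Ioo_subset_Iio_self
  have hzero : c * (1 - s * (1 / s)) ^ n = 0 := by
    rw [mul_one_div_cancel hs.ne', sub_self, zero_pow hn, mul_zero]
  exact ⟨bijOn_div_id_Ioo_Ioi (one_div_pos.2 hs) (by fun_prop) hanti
      (fun v hv => hpos v hv.2) hzero.le,
    strictAntiOn_div_id_of_antitoneOn Ioo_subset_Ioi_self hanti fun v hv => hpos v hv.2⟩

/-- For `α, β > 0`, the function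
`f(v) = (1/(αβ+1))·(1 − (β+α)v)²/v` maps `(0, 1/(α+β))` bijectively onto `(0, ∞)`,
and is strictly decreasing on this interval. -/
theorem stmt_5 (α β : ℝ) (hα : 0 < α) (hβ : 0 < β) :
    Set.BijOn (fun v : ℝ => (1 / (α * β + 1)) * (1 - (β + α) * v) ^ 2 / v)
        (Set.Ioo 0 (1 / (α + β))) (Set.Ioi 0) ∧
    StrictAntiOn (fun v : ℝ => (1 / (α * β + 1)) * (1 - (β + α) * v) ^ 2 / v)
        (Set.Ioo 0 (1 / (α + β))) := by
  rw [add_comm α β]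
  exact stmt_5_general (by positivity) (by positivity) two_ne_zero
end

section
/- Let β, γ > 0 be real numbers. A 2×2 contingency table P (strictly positive entries summing to 1) satisfies r_∥ = β² and r_= = γ² if and only if there exists a real number v with 0 < v < 1/(β+γ) such that p₀₀ = (β/(β + 1/γ))·(1 − (β+γ)v), p₀₁ = γv, p₁₀ = βv, and p₁₁ = (1/(βγ+1))·(1 − (β+γ)v). -/
/-!
The two odds ratios are the product and the quotient of the diagonal ratio `s = p₀₀ / p₁₁` and the
antidiagonal ratio `t = p₁₀ / p₀₁`. Hence `r_∥ = β²` and `r_= = γ²` amount to `s = βγ` and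
`t = β / γ`. The second equation says that `(p₀₁, p₁₀) = v (γ, β)` for some `v > 0`; the first one
splits the remaining mass `1 - (β + γ) v` between `p₀₀` and `p₁₁` in the proportion `βγ : 1`.
-/

section Field

variable {K : Type*} [Field K]

lemma div_eq_iff_eq_share_mul_add {a d r : K} (hd : d ≠ 0) (hr : r + 1 ≠ 0) :
    a / d = r ↔ a = r / (r + 1) * (a + d) ∧ d = 1 / (r + 1) * (a + d) := by
  constructor
  · intro h
    obtain rfl : a = r * d := (div_eq_iff hd).1 h
    constructor <;> field_simp
  · rintro ⟨ha, hd'⟩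
    rw [div_eq_iff hd]
    calc a = r * (1 / (r + 1) * (a + d)) := by rw [← mul_assoc, mul_one_div, ← ha]
      _ = r * d := by rw [← hd']

end Field

section LinearOrderedField

variable {K : Type*} [Field K] [LinearOrder K] [IsStrictOrderedRing K]

lemma mul_eq_sq_and_div_eq_sq_iff_s8 {s t β γ : K} (hs : 0 ≤ s) (hβ : 0 < β) (hγ : 0 < γ) :
    s * t = β ^ 2 ∧ s / t = γ ^ 2 ↔ s = β * γ ∧ t = β / γ := by
  constructor
  · rintro ⟨hmul, hdiv⟩
    have ht : t ≠ 0 := right_ne_zero_of_mul (hmul ▸ pow_ne_zero 2 hβ.ne')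
    have hsq : s ^ 2 = (β * γ) ^ 2 :=
      calc s ^ 2 = s * t * (s / t) := by field_simp
        _ = (β * γ) ^ 2 := by rw [hmul, hdiv, mul_pow]
    obtain rfl : s = β * γ := (pow_left_inj₀ hs (by positivity) two_ne_zero).1 hsq
    refine ⟨rfl, (eq_div_iff hγ.ne').2 (mul_left_cancel₀ hβ.ne' ?_)⟩
    linear_combination hmul
  · rintro ⟨rfl, rfl⟩
    constructor <;> field_simp

lemma odds_ratios_eq_sq_iff {a b c d β γ : K} (ha : 0 ≤ a) (hd : 0 ≤ d) (hβ : 0 < β) (hγ : 0 < γ) :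
    a * c / (b * d) = β ^ 2 ∧ a * b / (c * d) = γ ^ 2 ↔ a / d = β * γ ∧ c / b = β / γ := by
  rw [← mul_eq_sq_and_div_eq_sq_iff_s8 (div_nonneg ha hd) hβ hγ, div_mul_div_comm, div_div_div_eq,
    mul_comm d b, mul_comm d c]

lemma div_eq_div_iff_exists_pos_eq_mul {b c β γ : K} (hb : 0 < b) (hγ : 0 < γ) :
    c / b = β / γ ↔ ∃ v, 0 < v ∧ b = γ * v ∧ c = β * v := by
  constructor
  · intro h
    refine ⟨b / γ, div_pos hb hγ, (mul_div_cancel₀ b hγ.ne').symm, ?_⟩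
    rw [(div_eq_iff hb.ne').1 h, div_mul_eq_mul_div, mul_div_assoc]
  · rintro ⟨v, hv, rfl, rfl⟩
    exact mul_div_mul_right β γ hv.ne'

theorem stmt_8_general {β γ p00 p01 p10 p11 : K} (hβ : 0 < β) (hγ : 0 < γ)
    (h00 : 0 < p00) (h01 : 0 < p01) (h11 : 0 < p11)
    (hsum : p00 + p01 + p10 + p11 = 1) :
    (p00 * p10 / (p01 * p11) = β ^ 2 ∧ p00 * p01 / (p10 * p11) = γ ^ 2) ↔
    ∃ v : K, 0 < v ∧ v < 1 / (β + γ) ∧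
      p00 = (β / (β + 1 / γ)) * (1 - (β + γ) * v) ∧
      p01 = γ * v ∧
      p10 = β * v ∧
      p11 = (1 / (β * γ + 1)) * (1 - (β + γ) * v) := by
  have hdiag : β / (β + 1 / γ) = β * γ / (β * γ + 1) := by field_simp
  have hrest (v : K) (e01 : p01 = γ * v) (e10 : p10 = β * v) :
      p00 + p11 = 1 - (β + γ) * v := by
    linear_combination hsum - e01 - e10
  rw [odds_ratios_eq_sq_iff h00.le h11.le hβ hγ, div_eq_div_iff_exists_pos_eq_mul h01 hγ,
    div_eq_iff_eq_share_mul_add h11.ne' (by positivity), hdiag]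
  constructor
  · rintro ⟨⟨e00, e11⟩, v, hv, e01, e10⟩
    have hv_lt : v < 1 / (β + γ) := by
      rw [lt_div_iff₀' (by positivity)]
      linarith [hrest v e01 e10]
    rw [hrest v e01 e10] at e00 e11
    exact ⟨v, hv, hv_lt, e00, e01, e10, e11⟩
  · rintro ⟨v, hv, -, e00, e01, e10, e11⟩
    rw [← hrest v e01 e10] at e00 e11
    exact ⟨⟨e00, e11⟩, v, hv, e01, e10⟩

end LinearOrderedField

/-- A 2×2 contingency table satisfies `r_∥ = β²` and `r_= = γ²`
iff it has the parametric form of Proposition `==PROP` for some `0 < v < 1/(β+γ)`. -/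
theorem stmt_8 (β γ p00 p01 p10 p11 : ℝ) (hβ : 0 < β) (hγ : 0 < γ)
    (h00 : 0 < p00) (h01 : 0 < p01) (h10 : 0 < p10) (h11 : 0 < p11)
    (hsum : p00 + p01 + p10 + p11 = 1) :
    (p00 * p10 / (p01 * p11) = β ^ 2 ∧ p00 * p01 / (p10 * p11) = γ ^ 2) ↔
    ∃ v : ℝ, 0 < v ∧ v < 1 / (β + γ) ∧
      p00 = (β / (β + 1 / γ)) * (1 - (β + γ) * v) ∧
      p01 = γ * v ∧
      p10 = β * v ∧
      p11 = (1 / (β * γ + 1)) * (1 - (β + γ) * v) :=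
  stmt_8_general hβ hγ h00 h01 h11 hsum
end

section
/- Let β, γ > 0. The function g(v) = (β/(βγ+1))²·(1 − (β+γ)v)²/v² maps the open interval (0, 1/(β+γ)) bijectively onto (0, +∞). Consequently, with r_∥ = β² and r_= = γ² fixed, the third ratio r_× can take any value in (0, +∞). -/
/-!
On `v ≠ 0` the function is `(c * (v⁻¹ - s)) ^ 2` with `c = β / (β * γ + 1)` and `s = β + γ`, a
composite of three bijections: inversion from `(0, s⁻¹)` onto `(s, ∞)`, an increasing affine map
from `(s, ∞)` onto `(0, ∞)`, and squaring on `(0, ∞)`.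
-/

open Set

section LinearOrderedField

variable {K : Type*} [Field K] [LinearOrder K] [IsStrictOrderedRing K]

theorem bijOn_inv_Ioo_zero_inv {a : K} (ha : 0 < a) :
    BijOn (fun x : K => x⁻¹) (Ioo 0 a⁻¹) (Ioi a) := by
  have image_eq : (fun x : K => x⁻¹) '' Ioo 0 a⁻¹ = Ioi a := by
    rw [image_inv_eq_inv, inv_Ioo_0_left (inv_pos.2 ha), inv_inv]
  exact image_eq ▸ inv_injective.injOn.bijOn_image

theorem bijOn_const_mul_sub_Ioi {c : K} (hc : 0 < c) (a : K) :
    BijOn (fun x : K => c * (x - a)) (Ioi a) (Ioi 0) := by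
  have sub_bijOn : BijOn (fun x : K => x - a) (Ioi a) (Ioi 0) := by
    simpa using (sub_left_injective (b := a)).injOn.bijOn_image (s := Ioi a)
  have mul_bijOn : BijOn (fun x : K => c * x) (Ioi 0) (Ioi 0) := by
    simpa [image_mul_left_Ioi hc] using
      (mul_right_injective₀ hc.ne').injOn.bijOn_image (s := Ioi 0)
  exact mul_bijOn.comp sub_bijOn

end LinearOrderedField

theorem bijOn_pow_Ioi_zero {n : ℕ} (hn : n ≠ 0) :
    BijOn (fun x : ℝ => x ^ n) (Ioi 0) (Ioi 0) :=
  InvOn.bijOn (f' := fun y : ℝ => y ^ (n⁻¹ : ℝ))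
    ⟨fun _ hx => Real.pow_rpow_inv_natCast (le_of_lt hx) hn,
      fun _ hy => Real.rpow_inv_natCast_pow (le_of_lt hy) hn⟩
    (fun _ hx => mem_Ioi.2 (pow_pos (mem_Ioi.1 hx) n))
    (fun _ hy => Real.rpow_pos_of_pos hy _)

theorem stmt_10_general {c s : ℝ} (hc : 0 < c) (hs : 0 < s) {n : ℕ} (hn : n ≠ 0) :
    BijOn (fun v : ℝ => c ^ n * (1 - s * v) ^ n / v ^ n) (Ioo 0 (1 / s)) (Ioi 0) := by
  have comp_bijOn : BijOn (fun v : ℝ => (c * (v⁻¹ - s)) ^ n) (Ioo 0 (1 / s)) (Ioi 0) := by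
    rw [one_div]
    exact (bijOn_pow_Ioi_zero hn).comp
      ((bijOn_const_mul_sub_Ioi hc s).comp (bijOn_inv_Ioo_zero_inv hs))
  refine comp_bijOn.congr fun v ⟨v_pos, _⟩ => ?_
  have factor_eq : c * (v⁻¹ - s) = c * (1 - s * v) / v := by field_simp
  simp only [factor_eq, div_pow, mul_pow]

/-- For `β, γ > 0`, the function
`g(v) = (β/(βγ+1))²·(1 − (β+γ)v)²/v²` maps `(0, 1/(β+γ))` bijectively onto `(0, ∞)`. -/
theorem stmt_10 (β γ : ℝ) (hβ : 0 < β) (hγ : 0 < γ) :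
    Set.BijOn (fun v : ℝ => (β / (β * γ + 1)) ^ 2 * (1 - (β + γ) * v) ^ 2 / v ^ 2)
      (Set.Ioo 0 (1 / (β + γ))) (Set.Ioi 0) :=
  stmt_10_general (by positivity) (by positivity) two_ne_zero
end
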